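/- arXiv:2411.15765 — 11 statements merged into one kernel-verified Lean document; each statement's English description precedes it below -/
import Mathlib

section
/- Let k ≥ 1 be an integer. Every k-stepwise irregular graph is bipartite. -/
open SimpleGraph Finset

/-- A graph `G` is `k`-stepwise irregular if the degrees of every pair of adjacent
vertices differ by exactly `k`. -/
def IsSI {V : Type*} [Fintype V] (G : SimpleGraph V) [DecidableRel G.Adj] (k : ℕ) : Prop :=
  ∀ ⦃u v : V⦄, G.Adj u v → |(G.degree u : ℤ) - (G.degree v : ℤ)| = (k : ℤ)

/-!
If `f` changes by exactly `c > 0` along every edge, then the index of the interval `[nc, (n + 1)c)`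
containing `f v` changes by exactly one along every edge, so its parity is a proper `2`-colouring.
For a stepwise irregular graph, take `f` to be the degree.
-/

section Potential

variable {V : Type*} {G : SimpleGraph V}

theorem isBipartite_of_forall_adj_odd_sub {h : V → ℤ}
    (hodd : ∀ ⦃u v⦄, G.Adj u v → Odd (h u - h v)) : G.IsBipartite := by
  let parity : G.Coloring Bool := Coloring.mk (fun v ↦ decide (Even (h v))) fun {u v} huv heq ↦
    Int.not_even_iff_odd.mpr (hodd huv) (Int.even_sub.mpr (decide_eq_decide.mp heq))
  exact parity.colorable

variable {α : Type*} [AddCommGroup α] [LinearOrder α] [IsOrderedAddMonoid α] [Archimedean α]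

theorem odd_toIcoDiv_sub_toIcoDiv {a x y c : α} (hc : 0 < c) (hxy : |x - y| = c) :
    Odd (toIcoDiv hc a x - toIcoDiv hc a y) := by
  rcases (abs_eq hc.le).mp hxy with hup | hdown
  · obtain rfl : x = y + c := eq_add_of_sub_eq' hup
    simp only [toIcoDiv_add_right, add_sub_cancel_left, odd_one]
  · obtain rfl : x = y - c :=
      (eq_add_of_sub_eq' hdown).trans (sub_eq_add_neg y c).symm
    simp only [toIcoDiv_sub, sub_sub_cancel_left, odd_neg_one]

theorem isBipartite_of_forall_adj_abs_sub_eq {f : V → α} {c : α} (hc : 0 < c)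
    (hf : ∀ ⦃u v⦄, G.Adj u v → |f u - f v| = c) : G.IsBipartite :=
  isBipartite_of_forall_adj_odd_sub (h := fun v ↦ toIcoDiv hc 0 (f v)) fun _ _ huv ↦
    odd_toIcoDiv_sub_toIcoDiv hc (hf huv)

end Potential

theorem ksi_bipartite_general {V : Type*} (G : SimpleGraph V) [G.LocallyFinite] (k : ℕ)
    (hk : 1 ≤ k) (hSI : ∀ ⦃u v : V⦄, G.Adj u v → |(G.degree u : ℤ) - (G.degree v : ℤ)| = (k : ℤ)) :
    G.Colorable 2 :=
  isBipartite_of_forall_adj_abs_sub_eq (Int.natCast_pos.mpr hk) hSI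

/-- Every `k`-stepwise irregular graph (`k ≥ 1`) is bipartite. -/
theorem ksi_bipartite {V : Type*} [Fintype V] (G : SimpleGraph V) [DecidableRel G.Adj]
    (k : ℕ) (hk : 1 ≤ k) (hSI : IsSI G k) : G.Colorable 2 :=
  ksi_bipartite_general G k hk hSI
end

section
/- Let k ≥ 1 be an integer and let G be a connected k-stepwise irregular graph of diameter 2 with n vertices. Then G is isomorphic to the complete bipartite graph K_{(n+k)/2, (n−k)/2}; in particular n + k is even. -/
open SimpleGraph Finset

/-!
Crossing an edge changes the degree by exactly `k`, hence changes `⌊deg / k⌋` by exactly one, so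
the parity of `⌊deg / k⌋` is a proper two-colouring. Vertices of different colours have no common
neighbour; in diameter two they must therefore be adjacent, and the graph is complete bipartite.
The degrees are then the sizes of the opposite parts, which differ by `k` and add up to `n`.
-/

section CompleteBipartite

variable {V : Type*} {G : SimpleGraph V} {s t : Set V}

theorem isCompleteBetween_of_isBipartiteWith_of_ediam_le_two (hb : G.IsBipartiteWith s t)
    (hd : G.ediam ≤ 2) : G.IsCompleteBetween s t := by
  intro u hu v hv
  by_contra huv
  have hcommon : G.commonNeighbors u v ≠ ∅ := fun hempty =>
    (two_lt_edist_iff.2 ⟨hb.disjoint.ne_of_mem hu hv, huv, hempty⟩).not_ge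
      (edist_le_ediam.trans hd)
  obtain ⟨w, huw, hvw⟩ := Set.nonempty_iff_ne_empty.2 hcommon
  exact Set.disjoint_left.1 hb.disjoint
    (hb.symm.mem_of_mem_adj hv hvw) (hb.mem_of_mem_adj hu huw)

theorem neighborSet_eq_of_isBipartiteWith_of_isCompleteBetween (hb : G.IsBipartiteWith s t)
    (hc : G.IsCompleteBetween s t) {u : V} (hu : u ∈ s) : G.neighborSet u = t :=
  (isBipartiteWith_neighborSet_subset hb hu).antisymm fun _ hv => hc hu hv

theorem degree_eq_ncard_of_isBipartiteWith_of_isCompleteBetween (hb : G.IsBipartiteWith s t)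
    (hc : G.IsCompleteBetween s t) {u : V} [Fintype (G.neighborSet u)] (hu : u ∈ s) :
    G.degree u = t.ncard := by
  rw [← card_neighborSet_eq_degree, Set.fintypeCard_eq_ncard,
    neighborSet_eq_of_isBipartiteWith_of_isCompleteBetween hb hc hu]

theorem nonempty_iso_completeBipartiteGraph (hb : G.IsBipartiteWith s t)
    (hc : G.IsCompleteBetween s t) (hst : Codisjoint s t) :
    Nonempty (G ≃g completeBipartiteGraph s t) := by
  classical
  obtain rfl : sᶜ = t := IsCompl.compl_eq ⟨hb.disjoint, hst⟩
  have hadj (u v : V) : G.Adj u v ↔ u ∈ s ∧ v ∈ sᶜ ∨ u ∈ sᶜ ∧ v ∈ s :=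
    ⟨fun huv => hb.mem_of_adj huv, fun huv =>
      huv.elim (fun ⟨hu, hv⟩ => hc hu hv) fun ⟨hu, hv⟩ => (hc hv hu).symm⟩
  have hnotMem (u : ↥sᶜ) : (u : V) ∉ s := u.2
  refine ⟨RelIso.symm ⟨Equiv.Set.sumCompl s, ?_⟩⟩
  rintro (u | u) (v | v) <;> simp [hadj, hnotMem]

theorem nonempty_iso_completeBipartiteGraph_fin [Finite V] (hb : G.IsBipartiteWith s t)
    (hc : G.IsCompleteBetween s t) (hst : Codisjoint s t) :
    Nonempty (G ≃g completeBipartiteGraph (Fin s.ncard) (Fin t.ncard)) :=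
  (nonempty_iso_completeBipartiteGraph hb hc hst).map fun e =>
    e.trans (completeBipartiteGraphCongr (Finite.equivFin s) (Finite.equivFin t))

end CompleteBipartite

namespace IsSI

variable {V : Type*} [Fintype V] {G : SimpleGraph V} [DecidableRel G.Adj] {k : ℕ}

theorem degree_eq_add_or (h : IsSI G k) {u v : V} (huv : G.Adj u v) :
    G.degree u = G.degree v + k ∨ G.degree v = G.degree u + k := by
  rcases (abs_eq k.cast_nonneg).1 (h huv) with hdeg | hdeg <;> omega

theorem even_degree_div_iff (h : IsSI G k) (hk : 0 < k) {u v : V} (huv : G.Adj u v) :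
    Even (G.degree u / k) ↔ ¬ Even (G.degree v / k) := by
  rcases h.degree_eq_add_or huv with hdeg | hdeg <;>
    simp [hdeg, Nat.add_div_right _ hk, Nat.even_add_one]

theorem isBipartiteWith_even_degree_div (h : IsSI G k) (hk : 0 < k) :
    G.IsBipartiteWith {v | Even (G.degree v / k)} {v | Even (G.degree v / k)}ᶜ where
  disjoint := disjoint_compl_right
  mem_of_adj u v huv := by
    have := h.even_degree_div_iff hk huv
    simp only [Set.mem_ofPred_eq, Set.mem_compl_iff]
    tauto

theorem ncard_eq_add_or (h : IsSI G k) (hG : G ≠ ⊥) {s t : Set V}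
    (hb : G.IsBipartiteWith s t) (hc : G.IsCompleteBetween s t) :
    s.ncard = t.ncard + k ∨ t.ncard = s.ncard + k := by
  obtain ⟨u, v, huv⟩ := ne_bot_iff_exists_adj.1 hG
  wlog hmem : u ∈ s ∧ v ∈ t generalizing u v
  · exact this v u huv.symm ((hb.mem_of_adj huv).resolve_left hmem).symm
  have hdegu := degree_eq_ncard_of_isBipartiteWith_of_isCompleteBetween hb hc hmem.1
  have hdegv := degree_eq_ncard_of_isBipartiteWith_of_isCompleteBetween hb.symm
    ((isCompleteBetween_comm G).1 hc) hmem.2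
  rw [← hdegu, ← hdegv]
  exact h.degree_eq_add_or huv.symm

end IsSI

/-- A connected `k`-stepwise irregular graph of diameter `2` on `n` vertices is
isomorphic to `K_{(n+k)/2, (n-k)/2}`; in particular `n + k` is even. -/
theorem ksi_diam_two {V : Type*} [Fintype V] (G : SimpleGraph V) [DecidableRel G.Adj]
    (k : ℕ) (hk : 1 ≤ k) (hSI : IsSI G k) (hconn : G.Connected) (hdiam : G.diam = 2) :
    Even (Fintype.card V + k) ∧
      Nonempty (G ≃g completeBipartiteGraph (Fin ((Fintype.card V + k) / 2))
        (Fin ((Fintype.card V - k) / 2))) := by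
  have hediam : G.ediam = 2 := (ENat.toNat_eq_iff two_ne_zero).1 hdiam
  have hG : G ≠ ⊥ := by
    rintro rfl
    simp at hdiam
  obtain ⟨s, t, hst, hb⟩ : ∃ s t : Set V, Codisjoint s t ∧ G.IsBipartiteWith s t :=
    ⟨_, _, isCompl_compl.codisjoint, hSI.isBipartiteWith_even_degree_div hk⟩
  have hc := isCompleteBetween_of_isBipartiteWith_of_ediam_le_two hb hediam.le
  wlog hcard : s.ncard = t.ncard + k generalizing s t
  · exact this t s hst.symm hb.symm ((isCompleteBetween_comm G).1 hc)
      ((hSI.ncard_eq_add_or hG hb hc).resolve_left hcard)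
  have hunion : s ∪ t = Set.univ := hst.eq_top
  have hsum : s.ncard + t.ncard = Fintype.card V := by
    rw [← Set.ncard_union_eq hb.disjoint, hunion, Set.ncard_univ, Nat.card_eq_fintype_card]
  have hs : (Fintype.card V + k) / 2 = s.ncard := by omega
  have ht : (Fintype.card V - k) / 2 = t.ncard := by omega
  rw [hs, ht]
  exact ⟨⟨s.ncard, by omega⟩, nonempty_iso_completeBipartiteGraph_fin hb hc hst⟩
end

section
/- Let k ≥ 1 be an integer and let G and H be graphs, each with at least one vertex. The Cartesian (box) product G □ H is k-stepwise irregular if and only if both G and H are k-stepwise irregular. -/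
open SimpleGraph Finset

instance {α β : Type*} [DecidableEq α] [DecidableEq β]
    (G : SimpleGraph α) (H : SimpleGraph β) [DecidableRel G.Adj] [DecidableRel H.Adj] :
    DecidableRel (G □ H).Adj := fun x y =>
  decidable_of_iff (G.Adj x.1 y.1 ∧ x.2 = y.2 ∨ H.Adj x.2 y.2 ∧ x.1 = y.1) boxProd_adj.symm

/-!
An edge of `G □ H` moves one coordinate and fixes the other. Since degrees add, the fixed coordinate
contributes equally to the degrees of both ends, so the degree difference along the edge is the one
along its projection to a factor; conversely every edge of a factor is such a projection, as the
other factor has a vertex.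
-/

/-- `k`-stepwise irregularity of a locally finite graph, extending `IsSI` to infinite vertex sets:
the degrees of adjacent vertices differ by exactly `k`. -/
def IsStepwiseIrregular {V : Type*} (G : SimpleGraph V) [G.LocallyFinite] (k : ℕ) : Prop :=
  ∀ ⦃u v : V⦄, G.Adj u v → |(G.degree u : ℤ) - (G.degree v : ℤ)| = (k : ℤ)

theorem isSI_iff_isStepwiseIrregular {V : Type*} [Fintype V] {G : SimpleGraph V}
    [DecidableRel G.Adj] {k : ℕ} : IsSI G k ↔ IsStepwiseIrregular G k :=
  Iff.rfl

section BoxProd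

variable {α β : Type*} {G : SimpleGraph α} {H : SimpleGraph β}

theorem forall_boxProd_adj_iff {P : α × β → α × β → Prop} :
    (∀ ⦃x y : α × β⦄, (G □ H).Adj x y → P x y) ↔
      (∀ (b : β) ⦃a₁ a₂ : α⦄, G.Adj a₁ a₂ → P (a₁, b) (a₂, b)) ∧
        ∀ (a : α) ⦃b₁ b₂ : β⦄, H.Adj b₁ b₂ → P (a, b₁) (a, b₂) := by
  constructor
  · intro h
    exact ⟨fun _ _ _ hadj ↦ h (boxProd_adj_left.2 hadj),
      fun _ _ _ hadj ↦ h (boxProd_adj_right.2 hadj)⟩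
  · rintro ⟨hG, hH⟩ ⟨a₁, b₁⟩ ⟨a₂, b₂⟩ (⟨hadj, rfl : b₁ = b₂⟩ | ⟨hadj, rfl : a₁ = a₂⟩)
    · exact hG b₁ hadj
    · exact hH a₁ hadj

variable [G.LocallyFinite] [H.LocallyFinite]

theorem degree_boxProd_sub_degree_boxProd [(G □ H).LocallyFinite] (a₁ a₂ : α) (b₁ b₂ : β) :
    ((G □ H).degree (a₁, b₁) : ℤ) - (G □ H).degree (a₂, b₂) =
      ((G.degree a₁ : ℤ) - G.degree a₂) + ((H.degree b₁ : ℤ) - H.degree b₂) := by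
  simp only [degree_boxProd, Nat.cast_add, add_sub_add_comm]

-- Local finiteness of the product is found by unification: instance search would produce
-- `boxProdFintypeNeighborSet`, which is not defeq to the instance from a finite vertex set.
theorem ksi_boxProd_iff_general [Nonempty α] [Nonempty β] {_ : (G □ H).LocallyFinite} {k : ℕ} :
    IsStepwiseIrregular (G □ H) k ↔ IsStepwiseIrregular G k ∧ IsStepwiseIrregular H k := by
  unfold IsStepwiseIrregular
  rw [forall_boxProd_adj_iff]
  simp only [degree_boxProd_sub_degree_boxProd, sub_self, add_zero, zero_add, forall_const]

end BoxProd

/-- The Cartesian (box) product of two nonempty graphs is `k`-stepwise irregular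
if and only if both factors are. -/
theorem ksi_boxProd_iff {α β : Type*} [Fintype α] [Fintype β] [DecidableEq α] [DecidableEq β]
    [Nonempty α] [Nonempty β]
    (G : SimpleGraph α) (H : SimpleGraph β) [DecidableRel G.Adj] [DecidableRel H.Adj]
    (k : ℕ) (hk : 1 ≤ k) :
    IsSI (G □ H) k ↔ (IsSI G k ∧ IsSI H k) := by
  simp only [isSI_iff_isStepwiseIrregular]
  exact ksi_boxProd_iff_general
end

section
/- Let k ≥ 1 be an integer. If T is a k-stepwise irregular tree (a connected acyclic graph with at least two vertices), then the diameter of T is even. -/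
open SimpleGraph Finset

/-! Each edge of a `k`-stepwise irregular graph changes the degree by `±k`, and `k ≡ -k` modulo
`2k`, so the degree modulo `2k` records the parity of the length of a walk. The ends of a diametral
path of a tree are leaves and so have the same degree; hence that path has even length. -/

lemma modEq_add_mul_length_of_walk {V : Type*} {G : SimpleGraph V} {f : V → ℤ} {c n : ℤ}
    (hf : ∀ ⦃x y⦄, G.Adj x y → f y ≡ f x + c [ZMOD n]) {u v : V} (p : G.Walk u v) :
    f v ≡ f u + c * p.length [ZMOD n] := by
  induction p with
  | nil => simp
  | @cons u w v huw p ih =>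
    calc f v ≡ f w + c * p.length [ZMOD n] := ih
      _ ≡ f u + c + c * p.length [ZMOD n] := (hf huw).add_right _
      _ = f u + c * (Walk.cons huw p).length := by rw [Walk.length_cons]; push_cast; ring

section StepwiseIrregular

variable {V : Type*} [Fintype V] {G : SimpleGraph V} [DecidableRel G.Adj] {k : ℕ} {u v : V}

lemma IsSI.degree_modEq_of_adj (hSI : IsSI G k) (huv : G.Adj u v) :
    (G.degree v : ℤ) ≡ G.degree u + k [ZMOD 2 * k] := by
  rw [Int.modEq_iff_dvd]
  rcases (abs_eq k.cast_nonneg).mp (hSI huv) with h | h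
  · exact ⟨1, by linarith⟩
  · exact ⟨0, by linarith⟩

lemma IsSI.degree_modEq_iff_even_length (hSI : IsSI G k) (hk : k ≠ 0) (p : G.Walk u v) :
    (G.degree v : ℤ) ≡ G.degree u [ZMOD 2 * k] ↔ Even p.length := by
  have hp : (G.degree v : ℤ) ≡ G.degree u + k * p.length [ZMOD 2 * k] :=
    modEq_add_mul_length_of_walk (f := fun x ↦ (G.degree x : ℤ))
      (fun _ _ ↦ hSI.degree_modEq_of_adj) p
  calc (G.degree v : ℤ) ≡ G.degree u [ZMOD 2 * k]
      ↔ G.degree u + k * p.length ≡ G.degree u [ZMOD 2 * k] :=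
        ⟨hp.symm.trans, hp.trans⟩
    _ ↔ (k * 2 : ℤ) ∣ k * p.length := by
        rw [Int.modEq_comm, Int.modEq_iff_dvd, add_sub_cancel_left, mul_comm 2]
    _ ↔ (2 : ℤ) ∣ p.length := mul_dvd_mul_iff_left (by exact_mod_cast hk)
    _ ↔ Even p.length := by rw [← even_iff_two_dvd, Int.even_coe_nat]

end StepwiseIrregular

section Leaves

variable {V : Type*} {G : SimpleGraph V} {u v w : V}

lemma eq_snd_of_isPath_of_adj_of_dist_le (hG : G.IsAcyclic) {p : G.Walk v u} (hp : p.IsPath)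
    (hvw : G.Adj v w) (hw : G.dist w u ≤ G.dist v u) : w = p.snd := by
  obtain ⟨q, hq⟩ := (hvw.reachable.symm.trans p.reachable).exists_walk_length_eq_dist
  have hdist : G.dist v u = G.dist w u + 1 := by
    have h := hG.dist_eq_dist_add_one_of_adj_of_reachable u hvw p.reachable.symm
    rw [G.dist_comm (u := u) (v := v), G.dist_comm (u := u) (v := w)] at h
    lia
  have hcons : (Walk.cons hvw q).IsPath :=
    Walk.isPath_of_length_eq_dist _ (by rw [Walk.length_cons, hq, hdist])
  have hunique : Walk.cons hvw q = p :=
    congrArg Subtype.val ((hG.subsingleton_path v u).elim ⟨_, hcons⟩ ⟨p, hp⟩)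
  rw [← hunique, Walk.snd_cons]

lemma degree_eq_one_of_forall_adj_dist_le [Fintype (G.neighborSet v)] (hG : G.IsAcyclic)
    (hreach : G.Reachable v u) (hne : v ≠ u) (h : ∀ w, G.Adj v w → G.dist w u ≤ G.dist v u) :
    G.degree v = 1 := by
  obtain ⟨p, hp⟩ := hreach.exists_isPath
  exact degree_eq_one_iff_existsUnique_adj.mpr
    ⟨p.snd, p.adj_snd (Walk.not_nil_of_ne hne),
      fun w hvw ↦ eq_snd_of_isPath_of_adj_of_dist_le hG hp hvw (h w hvw)⟩

lemma degree_eq_one_of_dist_eq_diam [Fintype (G.neighborSet v)] (hG : G.IsAcyclic)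
    (hdiam : G.diam ≠ 0) (hvu : G.dist v u = G.diam) : G.degree v = 1 := by
  obtain ⟨hne, hreach⟩ := dist_ne_zero_iff_ne_and_reachable.mp (hvu.trans_ne hdiam)
  exact degree_eq_one_of_forall_adj_dist_le hG hreach hne fun w _ ↦
    (dist_le_diam (ediam_ne_top_of_diam_ne_zero hdiam)).trans_eq hvu.symm

end Leaves

/-- A `k`-stepwise irregular tree has even diameter. -/
theorem ksi_tree_even_diam {V : Type*} [Fintype V] (G : SimpleGraph V) [DecidableRel G.Adj]
    (k : ℕ) (hk : 1 ≤ k) (hT : G.IsTree) (hn : 2 ≤ Fintype.card V) (hSI : IsSI G k) :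
    Even G.diam := by
  have : Nontrivial V := Fintype.one_lt_card_iff_nontrivial.mp hn
  have hdiam : G.diam ≠ 0 := connected_iff_diam_ne_zero.mp hT.connected
  obtain ⟨u, v, huv⟩ := G.exists_dist_eq_diam
  have hu : G.degree u = 1 := degree_eq_one_of_dist_eq_diam hT.isAcyclic hdiam huv
  have hv : G.degree v = 1 :=
    degree_eq_one_of_dist_eq_diam hT.isAcyclic hdiam (G.dist_comm.trans huv)
  obtain ⟨p, hp⟩ := hT.connected.exists_walk_length_eq_dist u v
  rw [← huv, ← hp, ← hSI.degree_modEq_iff_even_length (Nat.one_le_iff_ne_zero.mp hk), hu, hv]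
end

section
/- Let k ≥ 1 be an integer and let G be a k-stepwise irregular graph on n vertices with at least one edge. Then the maximum degree satisfies Δ(G) ≤ ⌊(n + k)/2⌋. -/
open SimpleGraph Finset

/-!
Around a triangle the degree changes by `±k ± k ± k ≠ 0`, so a `k`-stepwise irregular graph with
`k ≥ 1` is triangle-free. Adjacent vertices `u`, `v` therefore have disjoint neighbourhoods, and
`deg u + deg v ≤ n`. Since `deg v ≥ deg u - k`, this gives `2 * deg u ≤ n + k`.
-/

section TriangleFree

variable {V : Type*} {G : SimpleGraph V} {u v : V}

theorem disjoint_neighborSet_of_cliqueFree_three (hG : G.CliqueFree 3) (huv : G.Adj u v) :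
    Disjoint (G.neighborSet u) (G.neighborSet v) :=
  Set.disjoint_left.2 fun _ huw hvw ↦
    isIndepSet_neighborSet_of_triangleFree G hG u huv huw hvw.ne hvw

theorem degree_add_degree_le_card_of_cliqueFree_three [Fintype V] [DecidableRel G.Adj]
    (hG : G.CliqueFree 3) (huv : G.Adj u v) : G.degree u + G.degree v ≤ Fintype.card V := by
  classical
  have hdisj : Disjoint (G.neighborFinset u) (G.neighborFinset v) :=
    Set.disjoint_toFinset.2 (disjoint_neighborSet_of_cliqueFree_three hG huv)
  calc G.degree u + G.degree v = #(G.neighborFinset u ∪ G.neighborFinset v) :=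
        (card_union_of_disjoint hdisj).symm
    _ ≤ Fintype.card V := card_le_univ _

end TriangleFree

namespace IsSI

variable {V : Type*} [Fintype V] {G : SimpleGraph V} [DecidableRel G.Adj] {k : ℕ}

theorem degree_eq_add_or_degree_eq_add (hG : IsSI G k) {u v : V} (huv : G.Adj u v) :
    G.degree u = G.degree v + k ∨ G.degree v = G.degree u + k := by
  obtain h | h := (abs_eq k.cast_nonneg).1 (hG huv) <;> omega

theorem degree_le_degree_add (hG : IsSI G k) {u v : V} (huv : G.Adj u v) :
    G.degree u ≤ G.degree v + k := by
  obtain h | h := hG.degree_eq_add_or_degree_eq_add huv <;> omega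

theorem cliqueFree_three (hG : IsSI G k) (hk : 0 < k) : G.CliqueFree 3 := by
  classical
  intro s hs
  obtain ⟨a, b, c, hab, hac, hbc, -⟩ := is3Clique_iff.1 hs
  have hdab := hG.degree_eq_add_or_degree_eq_add hab
  have hdac := hG.degree_eq_add_or_degree_eq_add hac
  have hdbc := hG.degree_eq_add_or_degree_eq_add hbc
  omega

theorem two_mul_degree_le (hG : IsSI G k) (hk : 0 < k) (u : V) :
    2 * G.degree u ≤ Fintype.card V + k := by
  obtain hu | hu := (G.degree u).eq_zero_or_pos
  · simp [hu]
  · obtain ⟨v, huv⟩ := (G.degree_pos_iff_exists_adj u).1 hu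
    have hdiff : G.degree u ≤ G.degree v + k := hG.degree_le_degree_add huv
    have hsum : G.degree u + G.degree v ≤ Fintype.card V :=
      degree_add_degree_le_card_of_cliqueFree_three (hG.cliqueFree_three hk) huv
    omega

end IsSI

/-- A `k`-stepwise irregular graph on `n` vertices with at least one edge satisfies
`Δ(G) ≤ ⌊(n + k)/2⌋`. -/
theorem ksi_maxDegree_le {V : Type*} [Fintype V] (G : SimpleGraph V) [DecidableRel G.Adj]
    (k : ℕ) (hk : 1 ≤ k) (hSI : IsSI G k) (he : ∃ u v, G.Adj u v) :
    G.maxDegree ≤ (Fintype.card V + k) / 2 := by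
  refine G.maxDegree_le_of_forall_degree_le _ fun v ↦ ?_
  have hv : 2 * G.degree v ≤ Fintype.card V + k := hSI.two_mul_degree_le hk v
  omega
end

section
/- Let k ≥ 1 be an integer and let G be a k-stepwise irregular graph on n vertices with at least one edge, maximum degree Δ = Δ(G) and m edges. Then m ≤ n·Δ·(Δ − k)/(2Δ − k). -/
/-! Weight each vertex `v` by `1 / deg v`. Summed over all edges, the weights of the two endpoints
add up to the number of non-isolated vertices, hence to at most `n`. The endpoints of an edge have
degrees at most `Δ` and at most `Δ - k`, so every edge contributes at least `1 / Δ + 1 / (Δ - k)`,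
and `m * (1 / Δ + 1 / (Δ - k)) ≤ n`. -/

open SimpleGraph Finset

theorem abs_sub_lt_of_pos_of_le {α : Type*} [AddCommGroup α] [LinearOrder α]
    [IsOrderedAddMonoid α] {a b c : α} (ha : 0 < a) (hb : 0 < b) (hac : a ≤ c) (hbc : b ≤ c) :
    |a - b| < c :=
  abs_sub_lt_iff.2 ⟨(sub_lt_self a hb).trans_le hac, (sub_lt_self b ha).trans_le hbc⟩

theorem inv_add_inv_sub_le_inv_add_inv {K : Type*} [Field K] [LinearOrder K]
    [IsStrictOrderedRing K] {a b k D : K} (ha : 0 < a) (hb : 0 < b) (haD : a ≤ D) (hbD : b ≤ D)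
    (hk : k ≤ |a - b|) : D⁻¹ + (D - k)⁻¹ ≤ a⁻¹ + b⁻¹ := by
  wlog hba : b ≤ a generalizing a b
  · rw [add_comm a⁻¹]
    exact this hb ha hbD haD (abs_sub_comm a b ▸ hk) (le_of_not_ge hba)
  rw [abs_of_nonneg (sub_nonneg.2 hba)] at hk
  exact add_le_add (inv_anti₀ ha haD) (inv_anti₀ hb (by linarith))

section DegreeSums

variable {V : Type*} [Fintype V] (G : SimpleGraph V) [DecidableRel G.Adj]

theorem sum_sum_neighborFinset_comm {M : Type*} [AddCommMonoid M] (f : V → V → M) :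
    ∑ u, ∑ v ∈ G.neighborFinset u, f u v = ∑ v, ∑ u ∈ G.neighborFinset v, f u v :=
  sum_comm' fun u v => by simp [G.adj_comm u v]

theorem sum_sum_neighborFinset_add {R : Type*} [NonAssocSemiring R] (f : V → R) :
    ∑ u, ∑ v ∈ G.neighborFinset u, (f u + f v) = 2 * ∑ v, G.degree v * f v := by
  have hfst : ∑ u, ∑ _v ∈ G.neighborFinset u, f u = ∑ v, G.degree v * f v := by
    simp only [sum_const, card_neighborFinset_eq_degree, nsmul_eq_mul]
  simp only [sum_add_distrib]
  rw [sum_sum_neighborFinset_comm G fun _ v => f v, hfst, two_mul]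

variable {G} {K : Type*} [Field K] [LinearOrder K] [IsStrictOrderedRing K]

theorem card_edgeFinset_mul_le_card_of_le_inv_degree_add {c : K}
    (hc : ∀ ⦃u v⦄, G.Adj u v → c ≤ (G.degree u : K)⁻¹ + (G.degree v : K)⁻¹) :
    #G.edgeFinset * c ≤ Fintype.card V := by
  have hdeg : ∑ u, (G.degree u : K) = 2 * #G.edgeFinset := by
    exact_mod_cast G.sum_degrees_eq_twice_card_edges
  have htwo : 2 * (#G.edgeFinset * c) ≤ 2 * (Fintype.card V : K) :=
    calc 2 * (#G.edgeFinset * c) = ∑ u, ∑ _v ∈ G.neighborFinset u, c := by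
          simp only [sum_const, card_neighborFinset_eq_degree, nsmul_eq_mul, ← sum_mul, hdeg,
            mul_assoc]
      _ ≤ ∑ u, ∑ v ∈ G.neighborFinset u, ((G.degree u : K)⁻¹ + (G.degree v : K)⁻¹) :=
          sum_le_sum fun u _ => sum_le_sum fun v hv => hc ((G.mem_neighborFinset u v).1 hv)
      _ = 2 * ∑ v, (G.degree v : K) * (G.degree v : K)⁻¹ :=
          sum_sum_neighborFinset_add G fun v => (G.degree v : K)⁻¹
      _ ≤ 2 * ∑ _v : V, 1 := by
          gcongr
          exact mul_inv_le_one
      _ = 2 * Fintype.card V := by simp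
  exact le_of_mul_le_mul_left htwo two_pos

theorem ksi_size_le_general {k : K}
    (hk : ∀ ⦃u v⦄, G.Adj u v → k ≤ |(G.degree u : K) - G.degree v|) (he : ∃ u v, G.Adj u v) :
    (#G.edgeFinset : K) ≤
      Fintype.card V * G.maxDegree * (G.maxDegree - k) / (2 * G.maxDegree - k) := by
  have hpos {u v : V} (huv : G.Adj u v) : (0 : K) < G.degree u :=
    Nat.cast_pos.2 ((G.degree_pos_iff_exists_adj u).2 ⟨v, huv⟩)
  have hle (u : V) : (G.degree u : K) ≤ G.maxDegree := Nat.cast_le.2 (G.degree_le_maxDegree u)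
  obtain ⟨u₀, v₀, h₀⟩ := he
  have hΔ : (0 : K) < G.maxDegree := (hpos h₀).trans_le (hle u₀)
  have hΔk : (0 : K) < G.maxDegree - k := sub_pos.2 <| (hk h₀).trans_lt <|
    abs_sub_lt_of_pos_of_le (hpos h₀) (hpos h₀.symm) (hle u₀) (hle v₀)
  have hcard : #G.edgeFinset * ((G.maxDegree : K)⁻¹ + (G.maxDegree - k)⁻¹) ≤ Fintype.card V :=
    card_edgeFinset_mul_le_card_of_le_inv_degree_add fun u v huv =>
      inv_add_inv_sub_le_inv_add_inv (hpos huv) (hpos huv.symm) (hle u) (hle v) (hk huv)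
  have hden : (G.maxDegree : K)⁻¹ + (G.maxDegree - k)⁻¹ =
      (2 * G.maxDegree - k) / (G.maxDegree * (G.maxDegree - k)) := by
    rw [inv_add_inv hΔ.ne' hΔk.ne', two_mul, add_sub_assoc]
  rwa [hden, ← le_div_iff₀ (div_pos (by linarith) (mul_pos hΔ hΔk)), div_div_eq_mul_div,
    ← mul_assoc] at hcard

end DegreeSums

/-- A `k`-stepwise irregular graph on `n` vertices with at least one edge, maximum
degree `Δ` and `m` edges satisfies `m ≤ n·Δ·(Δ − k)/(2Δ − k)`. -/
theorem ksi_size_le {V : Type*} [Fintype V] [DecidableEq V]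
    (G : SimpleGraph V) [DecidableRel G.Adj]
    (k : ℕ) (hk : 1 ≤ k) (hSI : IsSI G k) (he : ∃ u v, G.Adj u v) :
    (G.edgeFinset.card : ℝ) ≤
      (Fintype.card V : ℝ) * G.maxDegree * ((G.maxDegree : ℝ) - k) /
        (2 * (G.maxDegree : ℝ) - k) :=
  ksi_size_le_general (fun _ _ huv => by exact_mod_cast (hSI huv).ge) he
end

section
/- Let k ≥ 1 be an integer and let G be a connected k-stepwise irregular graph on n vertices with radius at least 2, maximum degree Δ = Δ(G) and Wiener index W(G). Then W(G) ≥ n·( n − Δ(Δ − k)/(2Δ − k) − 1 ). -/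
open SimpleGraph Finset

/-!
Non-adjacent distinct vertices are at distance at least two, so the Wiener index of a connected
graph with `n` vertices and `m` edges is at least `n(n - 1) - m`. To bound `m`, give each edge `uv`
the weight `1 / deg u + 1 / deg v`: a vertex `u` contributes `1 / deg u` to each of its `deg u`
edges, so the weights add up to at most `n`. If the end degrees, both at most `Δ`, differ by at
least `k`, then the smaller one is at most `Δ - k` and the weight is at least
`1 / Δ + 1 / (Δ - k) = (2Δ - k) / (Δ(Δ - k))`.
-/

lemma inv_add_inv_le_of_le_abs_sub {K : Type*} [Field K] [LinearOrder K] [IsStrictOrderedRing K]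
    {a b D k : K} (ha : 0 < a) (hb : 0 < b) (haD : a ≤ D) (hbD : b ≤ D) (hab : k ≤ |a - b|) :
    D⁻¹ + (D - k)⁻¹ ≤ a⁻¹ + b⁻¹ := by
  rcases le_abs.1 hab with h | h
  · exact add_le_add (inv_anti₀ ha haD) (inv_anti₀ hb (by linarith))
  · rw [add_comm a⁻¹]
    exact add_le_add (inv_anti₀ hb hbD) (inv_anti₀ ha (by linarith))

section

variable {V : Type*} [Fintype V] {G : SimpleGraph V} [DecidableRel G.Adj]

lemma two_mul_card_le_sum_dist_add_degree {u : V} (hu : ∀ v, G.Reachable u v) :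
    2 * Fintype.card V ≤ ∑ v, G.dist u v + G.degree u + 2 := by
  classical
  have two_le (v : V) :
      2 ≤ G.dist u v + (if G.Adj u v then 1 else 0) + (if u = v then 2 else 0) := by
    by_cases huv : u = v
    · simp [huv]
    by_cases hadj : G.Adj u v
    · simp [huv, hadj, dist_eq_one_iff_adj.2 hadj]
    · simpa [huv, hadj] using
        Nat.succ_le_of_lt ((hu v).one_lt_dist_of_ne_of_not_adj huv hadj)
  calc 2 * Fintype.card V = ∑ _v : V, 2 := by simp [mul_comm]
    _ ≤ ∑ v, (G.dist u v + (if G.Adj u v then 1 else 0) + (if u = v then 2 else 0)) :=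
      sum_le_sum fun v _ ↦ two_le v
    _ = ∑ v, G.dist u v + G.degree u + 2 := by
      simp [sum_add_distrib, ← card_neighborFinset_eq_degree, neighborFinset_eq_filter]

lemma card_mul_card_sub_one_sub_card_edgeFinset_le_half_sum_dist (hG : G.Preconnected) :
    (Fintype.card V : ℝ) * (Fintype.card V - 1) - #G.edgeFinset ≤
      (∑ u, ∑ v, (G.dist u v : ℝ)) / 2 := by
  have h : ∑ _u : V, 2 * Fintype.card V ≤ ∑ u, (∑ v, G.dist u v + G.degree u + 2) :=
    sum_le_sum fun u _ ↦ two_mul_card_le_sum_dist_add_degree (hG u)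
  simp only [sum_add_distrib, sum_degrees_eq_twice_card_edges, sum_const, card_univ,
    smul_eq_mul] at h
  have h' : (Fintype.card V : ℝ) * (2 * Fintype.card V) ≤
      ∑ u, ∑ v, (G.dist u v : ℝ) + 2 * #G.edgeFinset + Fintype.card V * 2 := by
    exact_mod_cast h
  linarith

lemma sum_dart_fst {M : Type*} [AddCommMonoid M] (f : V → M) :
    ∑ d : G.Dart, f d.fst = ∑ v, G.degree v • f v := by
  classical
  rw [← Fintype.sum_fiberwise' (fun d : G.Dart ↦ d.fst) f]
  simp [← dart_fst_fiber_card_eq_degree, Fintype.card_subtype]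

lemma sum_dart_snd {M : Type*} [AddCommMonoid M] (f : V → M) :
    ∑ d : G.Dart, f d.snd = ∑ v, G.degree v • f v := by
  rw [← sum_dart_fst, ← Equiv.sum_comp Dart.symm_involutive.toPerm]
  rfl

lemma sum_dart_inv_degree_add_inv_degree_le {K : Type*} [Field K] [LinearOrder K]
    [IsStrictOrderedRing K] :
    ∑ d : G.Dart, ((G.degree d.fst : K)⁻¹ + (G.degree d.snd : K)⁻¹) ≤ 2 * Fintype.card V := by
  have h : ∑ v, G.degree v • (G.degree v : K)⁻¹ ≤ Fintype.card V := by
    calc ∑ v, G.degree v • (G.degree v : K)⁻¹ ≤ ∑ _v : V, 1 :=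
          sum_le_sum fun v _ ↦ by simpa using mul_inv_le_one
      _ = Fintype.card V := by simp
  rw [sum_add_distrib, sum_dart_fst fun v ↦ (G.degree v : K)⁻¹,
    sum_dart_snd fun v ↦ (G.degree v : K)⁻¹, ← two_mul]
  gcongr

lemma card_edgeFinset_mul_le_card {K : Type*} [Field K] [LinearOrder K] [IsStrictOrderedRing K]
    {c : K} (hc : ∀ ⦃u v⦄, G.Adj u v → c ≤ (G.degree u : K)⁻¹ + (G.degree v : K)⁻¹) :
    #G.edgeFinset * c ≤ Fintype.card V := by
  have h : 2 * (#G.edgeFinset * c) ≤ 2 * Fintype.card V := by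
    calc 2 * (#G.edgeFinset * c) = ∑ _d : G.Dart, c := by
          simp [dart_card_eq_twice_card_edges, mul_assoc]
      _ ≤ ∑ d : G.Dart, ((G.degree d.fst : K)⁻¹ + (G.degree d.snd : K)⁻¹) :=
          sum_le_sum fun d _ ↦ hc d.adj
      _ ≤ 2 * Fintype.card V := sum_dart_inv_degree_add_inv_degree_le
  exact le_of_mul_le_mul_left h two_pos

lemma card_edgeFinset_le_of_le_abs_degree_sub_degree (hG : G ≠ ⊥) {K : Type*} [Field K]
    [LinearOrder K] [IsStrictOrderedRing K] {k : K}
    (hk : ∀ ⦃u v⦄, G.Adj u v → k ≤ |(G.degree u : K) - G.degree v|) :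
    (#G.edgeFinset : K) ≤
      Fintype.card V * (G.maxDegree * (G.maxDegree - k) / (2 * G.maxDegree - k)) := by
  have degree_pos {u v : V} (h : G.Adj u v) : 0 < (G.degree u : K) := by
    exact_mod_cast (G.degree_pos_iff_exists_adj u).2 ⟨v, h⟩
  have degree_le (v : V) : (G.degree v : K) ≤ G.maxDegree := by
    exact_mod_cast G.degree_le_maxDegree v
  have hm : #G.edgeFinset * ((G.maxDegree : K)⁻¹ + (G.maxDegree - k)⁻¹) ≤ Fintype.card V :=
    card_edgeFinset_mul_le_card fun u v h ↦ inv_add_inv_le_of_le_abs_sub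
      (degree_pos h) (degree_pos h.symm) (degree_le u) (degree_le v) (hk h)
  obtain ⟨u, v, huv⟩ := ne_bot_iff_exists_adj.1 hG
  have hu := degree_pos huv
  have hv := degree_pos huv.symm
  have hΔ : 0 < (G.maxDegree : K) := hu.trans_le (degree_le u)
  have hΔk : 0 < (G.maxDegree : K) - k := sub_pos.2 <| (hk huv).trans_lt <|
    abs_sub_lt_iff.2 ⟨by linarith [degree_le u], by linarith [degree_le v]⟩
  have weight_eq : (G.maxDegree : K)⁻¹ + (G.maxDegree - k)⁻¹ =
      (G.maxDegree * (G.maxDegree - k) / (2 * G.maxDegree - k))⁻¹ := by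
    field_simp
    ring
  have h2Δk : 0 < 2 * (G.maxDegree : K) - k := by linarith
  rwa [weight_eq, ← div_eq_mul_inv, div_le_iff₀ (by positivity)] at hm

theorem ksi_wiener_lower_bound_general [Nontrivial V] (hG : G.Preconnected) {k : ℝ}
    (hk : ∀ ⦃u v⦄, G.Adj u v → k ≤ |(G.degree u : ℝ) - G.degree v|) :
    (Fintype.card V : ℝ) *
        ((Fintype.card V : ℝ) -
          (G.maxDegree : ℝ) * ((G.maxDegree : ℝ) - k) / (2 * (G.maxDegree : ℝ) - k) - 1) ≤
      (∑ u : V, ∑ v : V, (G.dist u v : ℝ)) / 2 := by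
  obtain ⟨u⟩ : Nonempty V := inferInstance
  obtain ⟨v, huv⟩ := hG.exists_adj_of_nontrivial u
  have hedges := card_edgeFinset_le_of_le_abs_degree_sub_degree
    (ne_bot_iff_exists_adj.2 ⟨u, v, huv⟩) hk
  have hdist := card_mul_card_sub_one_sub_card_edgeFinset_le_half_sum_dist hG
  linarith

end

/-- A connected `k`-stepwise irregular graph of radius at least `2` satisfies
`W(G) ≥ n(n − Δ(Δ − k)/(2Δ − k) − 1)`, where `W` is the Wiener index. -/
theorem ksi_wiener_lower_bound {V : Type*} [Fintype V] (G : SimpleGraph V)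
    [DecidableRel G.Adj] (k : ℕ) (hk : 1 ≤ k) (hSI : IsSI G k) (hconn : G.Connected)
    (hrad : ∀ v : V, ∃ u : V, 2 ≤ G.dist v u) :
    (Fintype.card V : ℝ) *
        ((Fintype.card V : ℝ) -
          (G.maxDegree : ℝ) * ((G.maxDegree : ℝ) - k) / (2 * (G.maxDegree : ℝ) - k) - 1) ≤
      (∑ u : V, ∑ v : V, (G.dist u v : ℝ)) / 2 := by
  obtain ⟨v⟩ := hconn.nonempty
  obtain ⟨u, hu⟩ := hrad v
  have : Nontrivial V := ⟨v, u, fun h ↦ by simp [h] at hu⟩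
  exact ksi_wiener_lower_bound_general hconn.preconnected fun _ _ h ↦ by
    exact_mod_cast (hSI h).ge
end

section
/- Let k ≥ 1 be an integer and let G be a k-stepwise irregular graph with at least one edge and maximum degree Δ = Δ(G). Then the number of vertices of G of degree Δ − k is at least Δ. -/
open SimpleGraph Finset

namespace IsSI

variable {V : Type*} [Fintype V] {G : SimpleGraph V} [DecidableRel G.Adj] {k : ℕ} {u v : V}

theorem degree_eq_sub_of_adj_of_degree_le (hSI : IsSI G k) (huv : G.Adj u v)
    (hvu : G.degree v ≤ G.degree u) : (G.degree v : ℤ) = G.degree u - k := by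
  have hdiff : (G.degree u : ℤ) - G.degree v = k := by
    rw [← hSI huv, abs_of_nonneg (sub_nonneg.2 (Nat.cast_le.2 hvu))]
  linarith

theorem degree_le_card_filter_degree_eq_sub (hSI : IsSI G k)
    (hu : ∀ v, G.Adj u v → G.degree v ≤ G.degree u) :
    G.degree u ≤ #{v | (G.degree v : ℤ) = G.degree u - k} := by
  have hsub : G.neighborFinset u ⊆ ({v | (G.degree v : ℤ) = G.degree u - k} : Finset V) := by
    intro v hv
    have huv : G.Adj u v := (G.mem_neighborFinset u v).1 hv
    exact (mem_filter_univ v).2 (hSI.degree_eq_sub_of_adj_of_degree_le huv (hu v huv))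
  exact (G.card_neighborFinset_eq_degree u).symm.trans_le (card_le_card hsub)

end IsSI

/-- In a `k`-stepwise irregular graph with at least one edge, the number of vertices
of degree `Δ − k` is at least `Δ`. -/
theorem ksi_a1_ge_maxDegree {V : Type*} [Fintype V] (G : SimpleGraph V) [DecidableRel G.Adj]
    (k : ℕ) (hk : 1 ≤ k) (hSI : IsSI G k) (he : ∃ u v, G.Adj u v) :
    G.maxDegree ≤
      (Finset.univ.filter fun v => (G.degree v : ℤ) = (G.maxDegree : ℤ) - k).card := by
  have : Nonempty V := he.nonempty
  obtain ⟨u, hu⟩ := G.exists_maximal_degree_vertex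
  rw [hu]
  exact hSI.degree_le_card_filter_degree_eq_sub fun v _ => hu ▸ G.degree_le_maxDegree v
end

section
/- Let k ≥ 1 be an integer and let G be a k-stepwise irregular graph with at least one edge and maximum degree Δ = Δ(G). Let a_0 be the number of vertices of degree Δ and a_1 the number of vertices of degree Δ − k. Then a_0·Δ ≤ a_1·(Δ − k). -/
open SimpleGraph Finset

theorem sum_degree_le_sum_degree_of_neighborFinset_subset {V : Type*} (G : SimpleGraph V)
    [LocallyFinite G] {s t : Finset V} (hst : ∀ u ∈ s, G.neighborFinset u ⊆ t) :
    ∑ u ∈ s, G.degree u ≤ ∑ v ∈ t, G.degree v := by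
  classical
  calc ∑ u ∈ s, G.degree u
      = ∑ u ∈ s, #(t.bipartiteAbove G.Adj u) := by
        refine sum_congr rfl fun u hu => ?_
        have neighbors_eq : t.bipartiteAbove G.Adj u = G.neighborFinset u := by
          ext v
          simpa using fun huv : G.Adj u v => hst u hu (by simpa using huv)
        rw [neighbors_eq, card_neighborFinset_eq_degree]
    _ = ∑ v ∈ t, #(s.bipartiteBelow G.Adj v) :=
        sum_card_bipartiteAbove_eq_sum_card_bipartiteBelow _
    _ ≤ ∑ v ∈ t, G.degree v := by
        refine sum_le_sum fun v _ => card_le_card fun u hu => ?_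
        exact (G.mem_neighborFinset v u).mpr ((mem_bipartiteBelow G.Adj).mp hu).2.symm

theorem IsSI.degree_eq_sub_of_adj_of_degree_le_s16 {V : Type*} [Fintype V] {G : SimpleGraph V}
    [DecidableRel G.Adj] {k : ℕ} (hSI : IsSI G k) {u v : V} (huv : G.Adj u v)
    (hle : G.degree v ≤ G.degree u) : (G.degree v : ℤ) = (G.degree u : ℤ) - k := by
  have hdiff := hSI huv
  rw [abs_of_nonneg (by lia)] at hdiff
  lia

/-- In a `k`-stepwise irregular graph with at least one edge, with `a₀` the number of
vertices of degree `Δ` and `a₁` the number of vertices of degree `Δ − k`, we have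
`a₀·Δ ≤ a₁·(Δ − k)`. -/
theorem ksi_a0_a1 {V : Type*} [Fintype V] (G : SimpleGraph V) [DecidableRel G.Adj]
    (k : ℕ) (hk : 1 ≤ k) (hSI : IsSI G k) (he : ∃ u v, G.Adj u v) :
    ((Finset.univ.filter fun v => G.degree v = G.maxDegree).card : ℤ) * G.maxDegree ≤
      ((Finset.univ.filter fun v => (G.degree v : ℤ) = (G.maxDegree : ℤ) - k).card : ℤ) *
        ((G.maxDegree : ℤ) - k) := by
  set A₀ := Finset.univ.filter fun v => G.degree v = G.maxDegree
  set A₁ := Finset.univ.filter fun v => (G.degree v : ℤ) = (G.maxDegree : ℤ) - k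
  have neighbors_A₀ : ∀ u ∈ A₀, G.neighborFinset u ⊆ A₁ := fun u hu v hv => by
    have degree_u : G.degree u = G.maxDegree := (mem_filter_univ u).mp hu
    have huv : G.Adj u v := (G.mem_neighborFinset u v).mp hv
    have hle : G.degree v ≤ G.degree u := degree_u ▸ G.degree_le_maxDegree v
    exact (mem_filter_univ v).mpr (degree_u ▸ hSI.degree_eq_sub_of_adj_of_degree_le_s16 huv hle)
  calc (#A₀ : ℤ) * G.maxDegree
      = ∑ u ∈ A₀, (G.degree u : ℤ) := by
        rw [← nsmul_eq_mul]
        exact (sum_eq_card_nsmul fun u hu => congrArg Nat.cast ((mem_filter_univ u).mp hu)).symm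
    _ ≤ ∑ v ∈ A₁, (G.degree v : ℤ) :=
        mod_cast sum_degree_le_sum_degree_of_neighborFinset_subset G neighbors_A₀
    _ = (#A₁ : ℤ) * (G.maxDegree - k) := by
        rw [← nsmul_eq_mul]
        exact sum_eq_card_nsmul fun v hv => (mem_filter_univ v).mp hv
end

section
/- Let k ≥ 1 be an integer and let G be a k-stepwise irregular graph with maximum degree Δ = Δ(G). Let a_0 and a_2 be the numbers of vertices of G of degree Δ and of degree Δ − 2k, respectively. If a_2 > 0, then a_0 + a_2 ≥ Δ − k + 1. -/
open SimpleGraph Finset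

/-!
If `a₂ > 0`, pick `v` of maximum degree `Δ` and `w` of degree `Δ - 2k`. As `w` has fewer neighbors
than `v`, some neighbor `u` of `v` is not adjacent to `w`. By maximality `u` has degree `Δ - k`, so
its `Δ - k` neighbors all have degree `Δ` or `Δ - 2k`, and `w` is one more vertex of this kind.
-/

theorem exists_adj_not_adj_of_degree_lt {V : Type*} {G : SimpleGraph V} {v w : V}
    [Fintype (G.neighborSet v)] [Fintype (G.neighborSet w)] (h : G.degree w < G.degree v) :
    ∃ u, G.Adj v u ∧ ¬ G.Adj w u := by
  simpa only [mem_neighborFinset] using Finset.exists_mem_notMem_of_card_lt_card h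

namespace IsSI

variable {V : Type*} [Fintype V] {G : SimpleGraph V} [DecidableRel G.Adj] {k : ℕ} {u v w : V}

theorem degree_eq_add_or_add_eq (hG : IsSI G k) (huv : G.Adj u v) :
    G.degree v = G.degree u + k ∨ G.degree v + k = G.degree u := by
  rcases (abs_eq (Int.natCast_nonneg k)).mp (hG huv) with h | h <;> omega

theorem degree_add_eq_maxDegree_of_adj (hG : IsSI G k) (hv : G.degree v = G.maxDegree)
    (hvu : G.Adj v u) : G.degree u + k = G.maxDegree := by
  have hu := G.degree_le_maxDegree u
  rcases hG.degree_eq_add_or_add_eq hvu with h | h <;> omega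

theorem degree_lt_card_add_card_of_not_adj (hG : IsSI G k)
    (hw : G.degree w = G.degree u + k ∨ G.degree w + k = G.degree u) (huw : ¬ G.Adj u w) :
    G.degree u < #{x | G.degree x = G.degree u + k} + #{x | G.degree x + k = G.degree u} := by
  classical
  have hss : G.neighborFinset u ⊂
      ({x | G.degree x = G.degree u + k ∨ G.degree x + k = G.degree u} : Finset V) := by
    refine (ssubset_iff_of_subset fun x hx ↦ ?_).mpr ⟨w, by simpa using hw, by simpa using huw⟩
    simpa using hG.degree_eq_add_or_add_eq ((G.mem_neighborFinset u x).mp hx)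
  calc
    G.degree u = #(G.neighborFinset u) := (G.card_neighborFinset_eq_degree u).symm
    _ < #{x | G.degree x = G.degree u + k ∨ G.degree x + k = G.degree u} := card_lt_card hss
    _ ≤ #{x | G.degree x = G.degree u + k} + #{x | G.degree x + k = G.degree u} := by
      rw [filter_or]
      exact card_union_le _ _

end IsSI

/-- In a `k`-stepwise irregular graph, with `a₀` and `a₂` the numbers of vertices of
degree `Δ` and of degree `Δ − 2k`: if `a₂ > 0` then `a₀ + a₂ ≥ Δ − k + 1`. -/
theorem ksi_a0_a2 {V : Type*} [Fintype V] (G : SimpleGraph V) [DecidableRel G.Adj]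
    (k : ℕ) (hk : 1 ≤ k) (hSI : IsSI G k)
    (h2 : 0 < (Finset.univ.filter
      fun v => (G.degree v : ℤ) = (G.maxDegree : ℤ) - 2 * k).card) :
    (G.maxDegree : ℤ) - k + 1 ≤
      ((Finset.univ.filter fun v => G.degree v = G.maxDegree).card : ℤ) +
        ((Finset.univ.filter
          fun v => (G.degree v : ℤ) = (G.maxDegree : ℤ) - 2 * k).card : ℤ) := by
  obtain ⟨w, hw⟩ := card_pos.mp h2
  replace hw : (G.degree w : ℤ) = G.maxDegree - 2 * k := (mem_filter.mp hw).2
  have : Nonempty V := ⟨w⟩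
  obtain ⟨v, hv⟩ := G.exists_maximal_degree_vertex
  have hwv : G.degree w < G.degree v := by omega
  obtain ⟨u, hvu, hwu⟩ := exists_adj_not_adj_of_degree_lt hwv
  have hu : G.degree u + k = G.maxDegree := hSI.degree_add_eq_maxDegree_of_adj hv.symm hvu
  have hwk : G.degree w + k = G.degree u := by omega
  have hlt := hSI.degree_lt_card_add_card_of_not_adj (Or.inr hwk) (mt (·.symm) hwu)
  have hA₂ (x : V) :
      G.degree x + k = G.degree u ↔ (G.degree x : ℤ) = G.maxDegree - 2 * k := by omega
  simp only [hu, hA₂] at hlt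
  omega
end

section
/- Let k ≥ 1 be an integer and let G be a k-stepwise irregular graph with maximum degree Δ = Δ(G). Let i ≥ 1 and suppose G has a vertex of degree Δ − ik which has a neighbor. Then Δ − ik ≤ a_{i−1} + a_{i+1}, where a_j denotes the number of vertices of G of degree Δ − jk. -/
open SimpleGraph Finset

section DegreeClass

variable {V : Type*} [Fintype V] (G : SimpleGraph V) [DecidableRel G.Adj]

/-- The set of vertices of degree `d`; the paper's `A_j` is `degreeClass G (Δ - j * k)`. The
degree is an integer, so that this class is empty, rather than the class of isolated vertices, when
`Δ < j * k`. -/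
def degreeClass (d : ℤ) : Finset V :=
  {v | (G.degree v : ℤ) = d}

theorem mem_degreeClass {d : ℤ} {v : V} : v ∈ degreeClass G d ↔ (G.degree v : ℤ) = d :=
  mem_filter_univ v

end DegreeClass

namespace IsSI

variable {V : Type*} [Fintype V] {G : SimpleGraph V} [DecidableRel G.Adj] {k : ℕ}

theorem degree_eq_add_or_degree_eq_sub (hG : IsSI G k) {v w : V} (hvw : G.Adj v w) :
    (G.degree w : ℤ) = G.degree v + k ∨ (G.degree w : ℤ) = G.degree v - k := by
  rcases eq_or_eq_neg_of_abs_eq (hG hvw.symm) with hup | hdown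
  · exact .inl (by lia)
  · exact .inr (by lia)

theorem neighborFinset_subset_degreeClass_union [DecidableEq V] (hG : IsSI G k) (v : V) :
    G.neighborFinset v ⊆
      degreeClass G (G.degree v + k) ∪ degreeClass G (G.degree v - k) := by
  intro w hw
  rw [mem_union, mem_degreeClass, mem_degreeClass]
  exact hG.degree_eq_add_or_degree_eq_sub ((G.mem_neighborFinset v w).mp hw)

theorem degree_le_card_degreeClass_add (hG : IsSI G k) (v : V) :
    G.degree v ≤ #(degreeClass G (G.degree v + k)) + #(degreeClass G (G.degree v - k)) := by
  classical
  calc G.degree v = #(G.neighborFinset v) := (G.card_neighborFinset_eq_degree v).symm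
    _ ≤ #(degreeClass G (G.degree v + k) ∪ degreeClass G (G.degree v - k)) :=
      card_le_card (hG.neighborFinset_subset_degreeClass_union v)
    _ ≤ #(degreeClass G (G.degree v + k)) + #(degreeClass G (G.degree v - k)) :=
      card_union_le _ _

end IsSI

/-- In a `k`-stepwise irregular graph, if `i ≥ 1` and some vertex of degree `Δ − ik`
has a neighbor, then `Δ − ik ≤ a_{i−1} + a_{i+1}`, where `a_j` counts the vertices of
degree `Δ − jk`. -/
theorem ksi_aj_bound {V : Type*} [Fintype V] (G : SimpleGraph V) [DecidableRel G.Adj]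
    (k : ℕ) (hk : 1 ≤ k) (hSI : IsSI G k) (i : ℕ) (hi : 1 ≤ i)
    (hv : ∃ v : V, (G.degree v : ℤ) = (G.maxDegree : ℤ) - i * k ∧ ∃ u, G.Adj v u) :
    (G.maxDegree : ℤ) - i * k ≤
      ((Finset.univ.filter
        fun v => (G.degree v : ℤ) = (G.maxDegree : ℤ) - (i - 1 : ℕ) * k).card : ℤ) +
      ((Finset.univ.filter
        fun v => (G.degree v : ℤ) = (G.maxDegree : ℤ) - (i + 1 : ℕ) * k).card : ℤ) := by
  obtain ⟨v, hdeg, -⟩ := hv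
  have hpred : (G.maxDegree : ℤ) - (i - 1 : ℕ) * k = G.degree v + k := by
    rw [hdeg, Nat.cast_pred hi]
    ring
  have hsucc : (G.maxDegree : ℤ) - (i + 1 : ℕ) * k = G.degree v - k := by
    rw [hdeg, Nat.cast_succ]
    ring
  rw [hpred, hsucc, ← hdeg, ← Nat.cast_add, Nat.cast_le]
  exact hSI.degree_le_card_degreeClass_add v
end
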